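/- For each j let G_j = g_j(X_j) be a real-valued function of X_j with ||G||_∞ := sup_j ||G_j||_{L∞} < ∞, and for k ≤ n set G_{k,n} = Σ_{j=k}^{n} G_j. Then: (i) there are constants C₁, C₂ > 0 depending only on the ellipticity constant C such that C₁ Σ_{j=k}^{n} Var(G_j) ≤ Var(G_{k,n}) ≤ C₂ Σ_{j=k}^{n} Var(G_j); and (ii) for every p > 2 there is a constant R_p depending only on p, C and ||G||_∞ such that || G_{k,n} − E[G_{k,n}] ||_{L^p} ≤ R_p (1 + √Var(G_{k,n})). -/

import Mathlib

open MeasureTheory ProbabilityTheory Filter Finset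
open scoped ENNReal Topology

noncomputable section

namespace EdgeworthMC

variable {Ω E : Type*} [MeasurableSpace Ω] [MeasurableSpace E]

/-- The standard Gaussian density `𝔤(u) = (2π)^{-1/2} e^{-u²/2}`. -/
def gaussDensity (u : ℝ) : ℝ := (Real.sqrt (2 * Real.pi))⁻¹ * Real.exp (-u ^ 2 / 2)

/-- `UEChain μ X κ C` : the process `X` is a Markov chain (with respect to the probability
measure `μ`) with transition kernels `κ n` from the state at time `n` to the state at time
`n+1`, and the chain is uniformly elliptic with ellipticity constant `C`:
`C⁻¹ ℙ(X_{n+1} ∈ A) ≤ ℙ(X_{n+1} ∈ A | X_n = x) ≤ C ℙ(X_{n+1} ∈ A)` for a.e. `x`. -/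
def UEChain (μ : Measure Ω) (X : ℕ → Ω → E) (κ : ℕ → Kernel E E) (C : ℝ) : Prop :=
  IsProbabilityMeasure μ ∧
  (∀ n, Measurable (X n)) ∧
  (∀ n, IsMarkovKernel (κ n)) ∧
  (∀ n (A : Set E), MeasurableSet A →
      (μ[fun ω => A.indicator (fun _ => (1 : ℝ)) (X (n + 1) ω) |
          ⨆ i : Fin (n + 1), MeasurableSpace.comap (X i) (inferInstance : MeasurableSpace E)]
        =ᵐ[μ] fun ω => (κ n (X n ω) A).toReal)) ∧
  (∀ n (A : Set E), MeasurableSet A → ∀ᵐ ω ∂μ,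
      κ n (X n ω) A ≤ ENNReal.ofReal C * Measure.map (X (n + 1)) μ A ∧
      Measure.map (X (n + 1)) μ A ≤ ENNReal.ofReal C * κ n (X n ω) A)

/-- Partial sums `S_N = ∑_{n=1}^N f_n(X_n)`. -/
def S (X : ℕ → Ω → E) (f : ℕ → E → ℤ) (N : ℕ) (ω : Ω) : ℤ :=
  ∑ n ∈ Finset.Icc 1 N, f n (X n ω)

/-- `V_N = Var(S_N)`. -/
def VN (μ : Measure Ω) (X : ℕ → Ω → E) (f : ℕ → E → ℤ) (N : ℕ) : ℝ :=
  variance (fun ω => ((S X f N ω : ℝ))) μ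

/-- `σ_N = √V_N`. -/
def sigN (μ : Measure Ω) (X : ℕ → Ω → E) (f : ℕ → E → ℤ) (N : ℕ) : ℝ :=
  Real.sqrt (VN μ X f N)

/-- `a_N = 𝔼(S_N)`. -/
def meanS (μ : Measure Ω) (X : ℕ → Ω → E) (f : ℕ → E → ℤ) (N : ℕ) : ℝ :=
  ∫ ω, ((S X f N ω : ℝ)) ∂μ

/-- The second largest value among the (finitely many) values of `p`, counted with
multiplicity: it equals `min_j max_{j' ≠ j} p j'`. -/
def secondLargest {ι : Type*} (p : ι → ℝ) : ℝ := ⨅ j, sSup (p '' {j}ᶜ)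

/-- `q_n(m)` : the second largest value among `ℙ(Y_n ≡ j mod m)`, `j = 0,…,m-1`. -/
def qres (μ : Measure Ω) (X : ℕ → Ω → E) (f : ℕ → E → ℤ) (n m : ℕ) : ℝ :=
  secondLargest (fun j : ZMod m => (μ {ω | ((f n (X n ω) : ZMod m)) = j}).toReal)

/-- `M_N = min_{2 ≤ m ≤ 2K} ∑_{n=1}^N q_n(m)`. -/
def MN (μ : Measure Ω) (X : ℕ → Ω → E) (f : ℕ → E → ℤ) (K N : ℕ) : ℝ :=
  sInf ((fun m => ∑ n ∈ Finset.Icc 1 N, qres μ X f n m) '' (Set.Icc 2 (2 * K)))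

/-- `S_N` obeys the Edgeworth expansion of order `r` : there are polynomials `P_{b,N}`,
with coefficients uniformly bounded in `N` and degrees not depending on `N`, such that
uniformly in `k ∈ ℤ`,
`ℙ(S_N = k) = ∑_{b=1}^r σ_N^{-b} P_{b,N}(k_N) 𝔤(k_N) + o(σ_N^{-r})`
where `k_N = (k - 𝔼 S_N)/σ_N`. -/
def Edgeworth (μ : Measure Ω) (X : ℕ → Ω → E) (f : ℕ → E → ℤ) (r : ℕ) : Prop :=
  ∃ (D : ℕ) (Cb : ℝ) (P : ℕ → ℕ → Polynomial ℝ),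
    (∀ b N, (P b N).natDegree ≤ D) ∧
    (∀ b N i, |(P b N).coeff i| ≤ Cb) ∧
    ∀ ε > 0, ∃ N₀, ∀ N ≥ N₀, ∀ k : ℤ,
      |(μ {ω | S X f N ω = k}).toReal -
          ∑ b ∈ Finset.Icc 1 r, (sigN μ X f N)⁻¹ ^ b *
            (P b N).eval (((k : ℝ) - meanS μ X f N) / sigN μ X f N) *
            gaussDensity (((k : ℝ) - meanS μ X f N) / sigN μ X f N)|
        ≤ ε * (sigN μ X f N)⁻¹ ^ r

/-- The σ-algebra generated by `X_{j 1}, …, X_{j ℓ}`. -/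
def sigmaOf (X : ℕ → Ω → E) {ℓ : ℕ} (j : Fin ℓ → ℕ) : MeasurableSpace Ω :=
  ⨆ i : Fin ℓ, MeasurableSpace.comap (X (j i)) (inferInstance : MeasurableSpace E)

/-- Conditional probability of the event `s` given the σ-algebra `m`. -/
def condProb (μ : Measure Ω) (m : MeasurableSpace Ω) (s : Set Ω) : Ω → ℝ :=
  μ[s.indicator (fun _ => (1 : ℝ)) | m]

/-- `S_N` obeys the Edgeworth expansion of order `r` in a conditionally stable way:
for every `ℓ`, the order `r` Edgeworth expansion holds for the conditional law of `S_N`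
given `X_{j_1},…,X_{j_ℓ}`, with error term `o_ℓ(σ_N^{-r})` and polynomial coefficient
bounds depending only on `ℓ` (and `r`), uniformly over all choices of indices
`1 ≤ j_1,…,j_ℓ ≤ N`. -/
def CondStableEdgeworth (μ : Measure Ω) (X : ℕ → Ω → E) (f : ℕ → E → ℤ) (r : ℕ) : Prop :=
  ∀ ℓ : ℕ, ∃ (D : ℕ) (Cb : ℝ), ∀ ε > 0, ∃ N₀, ∀ N ≥ N₀,
    ∀ j : Fin ℓ → ℕ, (∀ i, j i ∈ Finset.Icc 1 N) →
      ∃ P : ℕ → Ω → Polynomial ℝ,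
        (∀ b ω, (P b ω).natDegree ≤ D) ∧
        (∀ b ω i, |(P b ω).coeff i| ≤ Cb) ∧
        ∀ᵐ ω ∂μ, ∀ k : ℤ,
          |condProb μ (sigmaOf X j) {ω' | S X f N ω' = k} ω -
              ∑ b ∈ Finset.Icc 1 r, (sigN μ X f N)⁻¹ ^ b *
                (P b ω).eval (((k : ℝ) -
                    (μ[fun ω' => ((S X f N ω' : ℝ)) | sigmaOf X j]) ω) / sigN μ X f N) *
                gaussDensity (((k : ℝ) -
                    (μ[fun ω' => ((S X f N ω' : ℝ)) | sigmaOf X j]) ω) / sigN μ X f N)|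
            ≤ ε * (sigN μ X f N)⁻¹ ^ r

/-- `t` is a resonant point: `t = 2πl/m` with `0 < m ≤ 2K`, `0 ≤ l < m`. -/
def IsResonant (K : ℕ) (t : ℝ) : Prop :=
  ∃ l m : ℕ, 0 < m ∧ m ≤ 2 * K ∧ l < m ∧ t = 2 * Real.pi * l / m

/-- The conditional characteristic function `𝔼[e^{itS_N} | X_{j_1},…,X_{j_ℓ}]`. -/
def condChar (μ : Measure Ω) (X : ℕ → Ω → E) (f : ℕ → E → ℤ) (t : ℝ) (N : ℕ)
    {ℓ : ℕ} (j : Fin ℓ → ℕ) : Ω → ℂ :=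
  μ[fun ω => Complex.exp (Complex.I * (t : ℂ) * ((S X f N ω : ℤ) : ℂ)) | sigmaOf X j]

end EdgeworthMC

namespace EdgeworthMC

/-!
Ellipticity makes the next state of the chain quasi-independent of the past: joint probabilities
agree with products of probabilities up to the factor `C`. A conditional expectation given the past
therefore shrinks the variance, and the sup norm of a centred variable, by the factor `1 - C⁻¹`.

Put `Y j = g j (X j)` and let `U j` be the conditional expectation of `Y j + ⋯ + Y n` given the past
at time `j`. By the Markov property `U j` is a function of `X j`, and it satisfies the backward
recursion `U j = Y j + 𝔼[U (j + 1) | past j]`. The martingale decomposition writes the variance of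
the sum as `∑ j, (Var (U j) - Var 𝔼[U (j + 1) | past j])`, which the contraction makes comparable to
`∑ j, Var (U j)`, and the recursion in turn makes that comparable to `∑ j, Var (Y j)`.

For bounded centred `Y`, the contraction of the sup norm bounds every `U j` uniformly. If that bound
is at most one, `exp x ≤ 1 + x + x ^ 2` and quasi-independence give
`𝔼[exp U (j + 1) | past j] ≤ exp (𝔼[U (j + 1) | past j] + C * Var (U (j + 1)))`. Iterating backwards
bounds the exponential moment of the sum by `exp (C ^ 2 * v)`, `v` its variance, and rescaling the
sum by one plus its standard deviation turns this into the bound on the `L^p` norms.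
-/

section General

variable {Ω : Type*} {m m₀ : MeasurableSpace Ω} {μ : Measure Ω}

lemma exp_le_one_add_add_sq {x : ℝ} (hx : |x| ≤ 1) : Real.exp x ≤ 1 + x + x ^ 2 := by
  linarith [(abs_le.mp (Real.abs_exp_sub_one_sub_id_le hx)).2]

lemma variance_add_le_of_pos [IsFiniteMeasure μ] {Y Z : Ω → ℝ} (hY : MemLp Y 2 μ)
    (hZ : MemLp Z 2 μ) {δ : ℝ} (hδ : 0 < δ) :
    Var[Y + Z; μ] ≤ (1 + δ⁻¹) * Var[Y; μ] + (1 + δ) * Var[Z; μ] := by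
  have key : 0 ≤ δ⁻¹ * Var[Y - δ • Z; μ] :=
    mul_nonneg (inv_nonneg.mpr hδ.le) (variance_nonneg _ _)
  rw [variance_sub hY (hZ.const_smul δ), variance_smul, covariance_smul_right] at key
  have expand : δ⁻¹ * (Var[Y; μ] - 2 * (δ * cov[Y, Z; μ]) + δ ^ 2 * Var[Z; μ])
      = δ⁻¹ * Var[Y; μ] - 2 * cov[Y, Z; μ] + δ * Var[Z; μ] := by
    field_simp
  rw [variance_add hY hZ]
  linarith

lemma variance_add_add_variance_condExp [IsProbabilityMeasure μ] (hm : m ≤ m₀) {Y Z : Ω → ℝ}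
    (hYm : AEStronglyMeasurable[m] Y μ) (hY : MemLp Y 2 μ) (hZ : MemLp Z 2 μ) :
    Var[Y + Z; μ] + Var[μ[Z | m]; μ] = Var[Y + μ[Z | m]; μ] + Var[Z; μ] := by
  have condExp_eq : μ[Y + Z | m] =ᵐ[μ] Y + μ[Z | m] :=
    (condExp_add (hY.integrable one_le_two) (hZ.integrable one_le_two) m).trans
      ((condExp_of_aestronglyMeasurable' hm hYm (hY.integrable one_le_two)).add .rfl)
  have condVar_eq : Var[Y + Z; μ | m] =ᵐ[μ] Var[Z; μ | m] := by
    refine condExp_congr_ae ?_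
    filter_upwards [condExp_eq] with ω hω
    simp only [Pi.sub_apply, Pi.add_apply, Pi.pow_apply, hω]
    ring
  have total_add := integral_condVar_add_variance_condExp hm (hY.add hZ)
  rw [integral_congr_ae condVar_eq, variance_congr condExp_eq] at total_add
  linarith [integral_condVar_add_variance_condExp hm hZ]

lemma condExp_le_condExp_of_forall_setIntegral_le [IsFiniteMeasure μ] (hm : m ≤ m₀)
    {f g : Ω → ℝ} (hf : Integrable f μ) (hg : Integrable g μ)
    (hfg : ∀ s, MeasurableSet[m] s → ∫ ω in s, f ω ∂μ ≤ ∫ ω in s, g ω ∂μ) :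
    μ[f | m] ≤ᵐ[μ] μ[g | m] := by
  refine ae_le_of_ae_le_trim (hm := hm) (ae_le_of_forall_setIntegral_le
    (integrable_condExp.trim hm stronglyMeasurable_condExp)
    (integrable_condExp.trim hm stronglyMeasurable_condExp) fun s hs _ ↦ ?_)
  rw [← setIntegral_trim hm stronglyMeasurable_condExp hs,
    ← setIntegral_trim hm stronglyMeasurable_condExp hs,
    setIntegral_condExp hm hf hs, setIntegral_condExp hm hg hs]
  exact hfg s hs

lemma condExp_le_mul_condExp_of_condExp_le [IsFiniteMeasure μ] {m' : MeasurableSpace Ω}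
    (hmm' : m ≤ m') (hm' : m' ≤ m₀) {f g : Ω → ℝ} {a : ℝ} (hg : Integrable g μ)
    (hfg : ∀ᵐ ω ∂μ, μ[f | m'] ω ≤ a * g ω) : ∀ᵐ ω ∂μ, μ[f | m] ω ≤ a * μ[g | m] ω := by
  filter_upwards [condExp_mono (m := m) (g := a • g) integrable_condExp (hg.smul a) hfg,
    condExp_condExp_of_le (μ := μ) (f := f) hmm' hm',
    condExp_smul a g m (μ := μ)] with ω h_le h_tower h_smul
  rwa [h_tower, h_smul] at h_le

lemma integrable_exp_of_abs_le [IsFiniteMeasure μ] {f : Ω → ℝ} (hf : AEStronglyMeasurable f μ)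
    {b : ℝ} (hfb : ∀ᵐ ω ∂μ, |f ω| ≤ b) : Integrable (fun ω ↦ Real.exp (f ω)) μ := by
  refine .of_bound (Real.continuous_exp.comp_aestronglyMeasurable hf) (Real.exp b) ?_
  filter_upwards [hfb] with ω hω
  simpa using (abs_le.mp hω).2

lemma condExp_exp_le [IsFiniteMeasure μ] (hm : m ≤ m₀) {f : Ω → ℝ}
    (hf : AEStronglyMeasurable f μ) (hf1 : ∀ᵐ ω ∂μ, |f ω| ≤ 1) :
    ∀ᵐ ω ∂μ, μ[fun ω ↦ Real.exp (f ω) | m] ω ≤ Real.exp (μ[f | m] ω + μ[f ^ 2 | m] ω) := by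
  have hf_mem : MemLp f 2 μ := .of_bound hf 1 hf1
  have hf_int : Integrable f μ := hf_mem.integrable one_le_two
  have hf_sq_int : Integrable (f ^ 2) μ := hf_mem.integrable_sq
  have h_one_int : Integrable (fun _ ↦ (1 : ℝ)) μ := integrable_const 1
  have taylor : (fun ω ↦ Real.exp (f ω)) ≤ᵐ[μ] (fun _ ↦ (1 : ℝ)) + f + f ^ 2 :=
    hf1.mono fun ω hω ↦ exp_le_one_add_add_sq hω
  filter_upwards [condExp_mono (m := m) (integrable_exp_of_abs_le hf hf1)
      ((h_one_int.add hf_int).add hf_sq_int) taylor,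
    condExp_add (h_one_int.add hf_int) hf_sq_int m,
    condExp_add h_one_int hf_int m] with ω h_le h_add h_add'
  rw [h_add, Pi.add_apply, h_add', Pi.add_apply, condExp_const hm] at h_le
  linarith [Real.add_one_le_exp (μ[f | m] ω + μ[f ^ 2 | m] ω)]

lemma rpow_integral_rpow_abs_le_of_mgf_le {W : Ω → ℝ} {l K p : ℝ}
    (hl : 0 < l) (hp : 0 < p) (hpos : Integrable (fun ω ↦ Real.exp (l * W ω)) μ)
    (hneg : Integrable (fun ω ↦ Real.exp (-l * W ω)) μ)
    (hK : mgf W μ l ≤ K) (hK' : mgf W μ (-l) ≤ K) :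
    (∫ ω, |W ω| ^ p ∂μ) ^ (1 / p) ≤ p / l * (2 * K) ^ (1 / p) := by
  have pointwise (ω : Ω) : |W ω| ^ p ≤
      (p / l) ^ p * (Real.exp (l * W ω) + Real.exp (-l * W ω)) := by
    have := rpow_abs_le_mul_max_exp_of_pos (W ω) hp.le hl
    refine this.trans (mul_le_mul_of_nonneg_left ?_ (by positivity))
    exact max_le_add_of_nonneg (Real.exp_nonneg _) (Real.exp_nonneg _)
  have moment_le : ∫ ω, |W ω| ^ p ∂μ ≤ (p / l) ^ p * (2 * K) := calc
    ∫ ω, |W ω| ^ p ∂μ ≤ ∫ ω, (p / l) ^ p * (Real.exp (l * W ω) + Real.exp (-l * W ω)) ∂μ :=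
      integral_mono_of_nonneg (.of_forall fun ω ↦ by positivity)
        ((hpos.add hneg).const_mul _) (.of_forall pointwise)
    _ = (p / l) ^ p * (mgf W μ l + mgf W μ (-l)) := by
      rw [integral_const_mul, integral_add hpos hneg]; rfl
    _ ≤ (p / l) ^ p * (2 * K) := by gcongr; linarith
  have hK_nonneg : 0 ≤ K := mgf_nonneg.trans hK
  calc (∫ ω, |W ω| ^ p ∂μ) ^ (1 / p) ≤ ((p / l) ^ p * (2 * K)) ^ (1 / p) := by gcongr
    _ = p / l * (2 * K) ^ (1 / p) := by
      rw [Real.mul_rpow (by positivity) (by positivity), one_div,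
        Real.rpow_rpow_inv (by positivity) hp.ne']

end General

section QuasiIndependence

/-- Quantitative quasi-independence of two `σ`-algebras: on every pair of events, the joint
probability and the product of the probabilities agree up to a factor `C`. For a probability
measure, `C = 1` is independence. -/
def QuasiIndep {Ω : Type*} (C : ℝ) (m m' : MeasurableSpace Ω) {_ : MeasurableSpace Ω}
    (μ : Measure Ω) : Prop :=
  ∀ s t, MeasurableSet[m] s → MeasurableSet[m'] t →
    μ (s ∩ t) ≤ ENNReal.ofReal C * (μ s * μ t) ∧ μ s * μ t ≤ ENNReal.ofReal C * μ (s ∩ t)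

variable {Ω : Type*} {m m' m₀ : MeasurableSpace Ω} {μ : Measure Ω} {C : ℝ}

lemma lintegral_le_lintegral_of_forall_measurableSet_le (hm' : m' ≤ m₀) {ν ν' : Measure Ω}
    (hν : ∀ t, MeasurableSet[m'] t → ν t ≤ ν' t) {f : Ω → ℝ≥0∞} (hf : Measurable[m'] f) :
    ∫⁻ ω, f ω ∂ν ≤ ∫⁻ ω, f ω ∂ν' := by
  have trim_le : ν.trim hm' ≤ ν'.trim hm' := Measure.le_iff.mpr fun t ht ↦ by
    rw [trim_measurableSet_eq hm' ht, trim_measurableSet_eq hm' ht]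
    exact hν t ht
  rw [← lintegral_trim hm' hf, ← lintegral_trim hm' hf]
  exact lintegral_mono' trim_le le_rfl

namespace QuasiIndep

lemma one_le [IsProbabilityMeasure μ] (h : QuasiIndep C m m' μ) : 1 ≤ C := by
  simpa using (h Set.univ Set.univ .univ .univ).1

lemma setLIntegral_le (h : QuasiIndep C m m' μ) (hm' : m' ≤ m₀) {f : Ω → ℝ≥0∞}
    (hf : Measurable[m'] f) {s : Set Ω} (hs : MeasurableSet[m] s) :
    ∫⁻ ω in s, f ω ∂μ ≤ ENNReal.ofReal C * μ s * ∫⁻ ω, f ω ∂μ := by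
  rw [← smul_eq_mul, ← lintegral_smul_measure]
  refine lintegral_le_lintegral_of_forall_measurableSet_le hm' (fun t ht ↦ ?_) hf
  rw [Measure.restrict_apply (hm' _ ht), Set.inter_comm, Measure.smul_apply, smul_eq_mul, mul_assoc]
  exact (h s t hs ht).1

lemma mul_lintegral_le (h : QuasiIndep C m m' μ) (hm' : m' ≤ m₀) {f : Ω → ℝ≥0∞}
    (hf : Measurable[m'] f) {s : Set Ω} (hs : MeasurableSet[m] s) :
    μ s * ∫⁻ ω, f ω ∂μ ≤ ENNReal.ofReal C * ∫⁻ ω in s, f ω ∂μ := by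
  rw [← smul_eq_mul, ← smul_eq_mul, ← lintegral_smul_measure, ← lintegral_smul_measure]
  refine lintegral_le_lintegral_of_forall_measurableSet_le hm' (fun t ht ↦ ?_) hf
  rw [Measure.smul_apply, Measure.smul_apply, Measure.restrict_apply (hm' _ ht), Set.inter_comm,
    smul_eq_mul, smul_eq_mul]
  exact (h s t hs ht).2

variable [IsProbabilityMeasure μ] {f : Ω → ℝ} {b : ℝ}

lemma setIntegral_le_and_le (h : QuasiIndep C m m' μ) (hm' : m' ≤ m₀)
    (hfm : AEStronglyMeasurable[m'] f μ) (hf : Integrable f μ) (hf0 : 0 ≤ᵐ[μ] f) {s : Set Ω}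
    (hs : MeasurableSet[m] s) :
    ∫ ω in s, f ω ∂μ ≤ C * (μ.real s * ∫ ω, f ω ∂μ) ∧
      μ.real s * ∫ ω, f ω ∂μ ≤ C * ∫ ω in s, f ω ∂μ := by
  have hC : 0 ≤ C := zero_le_one.trans h.one_le
  let F : Ω → ℝ≥0∞ := fun ω ↦ ENNReal.ofReal (hfm.mk f ω)
  have hF : Measurable[m'] F := ENNReal.measurable_ofReal.comp hfm.stronglyMeasurable_mk.measurable
  have ofReal_integral {ν : Measure Ω} (hν : ν ≤ μ) :
      ENNReal.ofReal (∫ ω, f ω ∂ν) = ∫⁻ ω, F ω ∂ν :=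
    (ofReal_integral_eq_lintegral_ofReal (hf.mono_measure hν) (hν.absolutelyContinuous hf0)).trans
      (lintegral_congr_ae (hν.absolutelyContinuous (hfm.ae_eq_mk.fun_comp ENNReal.ofReal)))
  have integral_f_nonneg : 0 ≤ ∫ ω, f ω ∂μ := integral_nonneg_of_ae hf0
  have setIntegral_f_nonneg : 0 ≤ ∫ ω in s, f ω ∂μ := setIntegral_nonneg_of_ae hf0
  constructor
  · rw [← ENNReal.ofReal_le_ofReal_iff (by positivity), ENNReal.ofReal_mul hC,
      ENNReal.ofReal_mul measureReal_nonneg, ofReal_measureReal,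
      ofReal_integral Measure.restrict_le_self, ofReal_integral le_rfl, ← mul_assoc]
    exact h.setLIntegral_le hm' hF hs
  · rw [← ENNReal.ofReal_le_ofReal_iff (by positivity), ENNReal.ofReal_mul hC,
      ENNReal.ofReal_mul measureReal_nonneg, ofReal_measureReal,
      ofReal_integral Measure.restrict_le_self, ofReal_integral le_rfl]
    exact h.mul_lintegral_le hm' hF hs

lemma condExp_le (h : QuasiIndep C m m' μ) (hm : m ≤ m₀) (hm' : m' ≤ m₀)
    (hfm : AEStronglyMeasurable[m'] f μ) (hf : Integrable f μ) (hf0 : 0 ≤ᵐ[μ] f) :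
    ∀ᵐ ω ∂μ, μ[f | m] ω ≤ C * ∫ ω', f ω' ∂μ := by
  have := condExp_le_condExp_of_forall_setIntegral_le hm hf (integrable_const (C * ∫ ω, f ω ∂μ))
    fun s hs ↦ by
      rw [setIntegral_const, smul_eq_mul, mul_left_comm]
      exact (h.setIntegral_le_and_le hm' hfm hf hf0 hs).1
  rwa [condExp_const hm] at this

lemma integral_le_condExp (h : QuasiIndep C m m' μ) (hm : m ≤ m₀) (hm' : m' ≤ m₀)
    (hfm : AEStronglyMeasurable[m'] f μ) (hf : Integrable f μ) (hf0 : 0 ≤ᵐ[μ] f) :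
    ∀ᵐ ω ∂μ, ∫ ω', f ω' ∂μ ≤ C * μ[f | m] ω := by
  have le_smul := condExp_le_condExp_of_forall_setIntegral_le hm
    (integrable_const (∫ ω, f ω ∂μ)) (hf.smul C) fun s hs ↦ by
      rw [setIntegral_const, smul_eq_mul]
      simp only [Pi.smul_apply, smul_eq_mul, integral_const_mul]
      exact (h.setIntegral_le_and_le hm' hfm hf hf0 hs).2
  rw [condExp_const hm] at le_smul
  filter_upwards [le_smul, condExp_smul C f m (μ := μ)] with ω h_le h_smul
  rwa [h_smul] at h_le

lemma variance_le_condExp_sub_sq (h : QuasiIndep C m m' μ) (hm : m ≤ m₀) (hm' : m' ≤ m₀)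
    (hfm : AEStronglyMeasurable[m'] f μ) (hf : MemLp f 2 μ) (t : ℝ) :
    ∀ᵐ ω ∂μ, Var[f; μ] ≤ C * (μ[f ^ 2 | m] ω - 2 * t * μ[f | m] ω + t ^ 2) := by
  have hf_sub : MemLp (fun ω ↦ f ω - t) 2 μ := hf.sub (memLp_const t)
  have hf_int : Integrable f μ := hf.integrable one_le_two
  have hf_sq_int : Integrable (f ^ 2) μ := hf.integrable_sq
  have variance_le : Var[f; μ] ≤ ∫ ω, (f ω - t) ^ 2 ∂μ := by
    rw [← variance_sub_const hf.1 t]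
    exact variance_le_expectation_sq hf_sub.1
  have expand : (fun ω ↦ (f ω - t) ^ 2) = f ^ 2 - (2 * t) • f + fun _ ↦ t ^ 2 := by
    ext ω
    simp only [Pi.add_apply, Pi.sub_apply, Pi.pow_apply, Pi.smul_apply, smul_eq_mul]
    ring
  filter_upwards [h.integral_le_condExp (f := fun ω ↦ (f ω - t) ^ 2) hm hm'
      ((continuous_pow 2).comp_aestronglyMeasurable (hfm.sub aestronglyMeasurable_const))
      hf_sub.integrable_sq (.of_forall fun _ ↦ sq_nonneg _),
    condExp_add (hf_sq_int.sub (hf_int.smul (2 * t))) (integrable_const (t ^ 2)) m,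
    condExp_sub hf_sq_int (hf_int.smul (2 * t)) m, condExp_smul (2 * t) f m (μ := μ)]
    with ω h_le h_add h_sub h_smul
  refine variance_le.trans (h_le.trans_eq ?_)
  rw [expand, h_add, Pi.add_apply, h_sub, Pi.sub_apply, h_smul, condExp_const hm,
    Pi.smul_apply, smul_eq_mul]

lemma variance_le_condVar (h : QuasiIndep C m m' μ) (hm : m ≤ m₀) (hm' : m' ≤ m₀)
    (hfm : AEStronglyMeasurable[m'] f μ) (hf : MemLp f 2 μ) :
    ∀ᵐ ω ∂μ, Var[f; μ] ≤ C * Var[f; μ | m] ω := by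
  have rational_le : ∀ᵐ ω ∂μ, ∀ q : ℚ,
      Var[f; μ] ≤ C * (μ[f ^ 2 | m] ω - 2 * q * μ[f | m] ω + q ^ 2) :=
    ae_all_iff.mpr fun q ↦ h.variance_le_condExp_sub_sq hm hm' hfm hf q
  filter_upwards [rational_le, condVar_ae_eq_condExp_sq_sub_sq_condExp hm hf] with ω h_le h_condVar
  have real_le (t : ℝ) : Var[f; μ] ≤ C * (μ[f ^ 2 | m] ω - 2 * t * μ[f | m] ω + t ^ 2) :=
    Rat.denseRange_cast.induction_on t (isClosed_le continuous_const (by fun_prop)) h_le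
  convert real_le (μ[f | m] ω) using 2
  rw [h_condVar, Pi.sub_apply, Pi.pow_apply]
  ring

lemma variance_condExp_le (h : QuasiIndep C m m' μ) (hm : m ≤ m₀) (hm' : m' ≤ m₀)
    (hfm : AEStronglyMeasurable[m'] f μ) (hf : MemLp f 2 μ) :
    Var[μ[f | m]; μ] ≤ (1 - C⁻¹) * Var[f; μ] := by
  have hC : 0 < C := zero_lt_one.trans_le h.one_le
  have variance_le : Var[f; μ] ≤ C * ∫ ω, Var[f; μ | m] ω ∂μ := by
    rw [← integral_const_mul]
    simpa using integral_mono_ae (integrable_const _) (integrable_condVar.const_mul C)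
      (h.variance_le_condVar hm hm' hfm hf)
  linarith [(inv_mul_le_iff₀ hC).mpr variance_le, integral_condVar_add_variance_condExp hm hf]

lemma abs_condExp_le (h : QuasiIndep C m m' μ) (hm : m ≤ m₀) (hm' : m' ≤ m₀)
    (hfm : AEStronglyMeasurable[m'] f μ) (hf_zero : ∫ ω, f ω ∂μ = 0)
    (hfb : ∀ᵐ ω ∂μ, |f ω| ≤ b) : ∀ᵐ ω ∂μ, |μ[f | m] ω| ≤ (1 - C⁻¹) * b := by
  have hC : 0 < C := zero_lt_one.trans_le h.one_le
  have hf : Integrable f μ := .of_bound (hfm.mono hm') b hfb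
  have hb : Integrable (fun _ ↦ b) μ := integrable_const b
  have lower := h.integral_le_condExp hm hm' (aestronglyMeasurable_const.add hfm) (hb.add hf)
    (hfb.mono fun ω hω ↦ by simpa using neg_le_iff_add_nonneg'.mp (abs_le.mp hω).1)
  have upper := h.integral_le_condExp hm hm' (aestronglyMeasurable_const.sub hfm) (hb.sub hf)
    (hfb.mono fun ω hω ↦ sub_nonneg.mpr (abs_le.mp hω).2)
  rw [integral_add' hb hf, hf_zero, integral_const, probReal_univ, one_smul, add_zero] at lower
  rw [integral_sub' hb hf, hf_zero, integral_const, probReal_univ, one_smul, sub_zero] at upper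
  filter_upwards [lower, upper, condExp_add hb hf m, condExp_sub hb hf m]
    with ω h_lower h_upper h_add h_sub
  rw [h_add, Pi.add_apply, condExp_const hm, ← inv_mul_le_iff₀ hC] at h_lower
  rw [h_sub, Pi.sub_apply, condExp_const hm, ← inv_mul_le_iff₀ hC] at h_upper
  rw [abs_le]
  constructor <;> linarith

lemma condExp_exp_le_exp_add_integral_sq (h : QuasiIndep C m m' μ) (hm : m ≤ m₀) (hm' : m' ≤ m₀)
    (hfm : AEStronglyMeasurable[m'] f μ) (hf1 : ∀ᵐ ω ∂μ, |f ω| ≤ 1) :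
    ∀ᵐ ω ∂μ, μ[fun ω ↦ Real.exp (f ω) | m] ω ≤
      Real.exp (μ[f | m] ω + C * ∫ ω', f ω' ^ 2 ∂μ) := by
  have hf_sq_int : Integrable (fun ω ↦ f ω ^ 2) μ :=
    (MemLp.of_bound (hfm.mono hm') 1 hf1).integrable_sq
  filter_upwards [condExp_exp_le hm (hfm.mono hm') hf1,
    h.condExp_le hm hm' ((continuous_pow 2).comp_aestronglyMeasurable hfm) hf_sq_int
      (.of_forall fun _ ↦ sq_nonneg _)] with ω h_exp h_sq
  exact h_exp.trans (Real.exp_le_exp.mpr (add_le_add_right h_sq _))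

end QuasiIndep
end QuasiIndependence

section MarkovChain

variable {Ω E : Type*} [MeasurableSpace E]

/-- The `σ`-algebra generated by the state of the process at time `n`. -/
abbrev present (X : ℕ → Ω → E) (n : ℕ) : MeasurableSpace Ω :=
  MeasurableSpace.comap (X n) inferInstance

/-- The `σ`-algebra generated by the states of the process up to and including time `n`. -/
abbrev past (X : ℕ → Ω → E) (n : ℕ) : MeasurableSpace Ω :=
  ⨆ i : Fin (n + 1), present X i

variable {X : ℕ → Ω → E} {Y : ℕ → Ω → ℝ} {i j N : ℕ}

lemma present_le_past (hij : i ≤ j) : present X i ≤ past X j :=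
  le_iSup (fun i : Fin (j + 1) ↦ present X i) ⟨i, Nat.lt_succ_of_le hij⟩

lemma past_le_past (hij : i ≤ j) : past X i ≤ past X j :=
  iSup_le fun l ↦ present_le_past ((Nat.le_of_lt_succ l.2).trans hij)

/-- The partial sum `Y j + ⋯ + Y (N - 1)`, indexed by its lower end `j`. -/
def tailSum (Y : ℕ → Ω → ℝ) (N j : ℕ) : Ω → ℝ := ∑ i ∈ Ico j N, Y i

@[simp]
lemma tailSum_self : tailSum Y N N = 0 := by simp [tailSum]

lemma tailSum_eq_add (hj : j < N) : tailSum Y N j = Y j + tailSum Y N (j + 1) :=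
  sum_eq_sum_Ico_succ_bot hj Y

lemma tailSum_succ_eq_sum_Icc (k n : ℕ) :
    tailSum Y (n + 1) k = fun ω ↦ ∑ j ∈ Icc k n, Y j ω := by
  ext ω
  rw [tailSum, Finset.sum_apply, Ico_add_one_right_eq_Icc]

variable [MeasurableSpace Ω] {μ : Measure Ω} {κ : ℕ → Kernel E E} {C : ℝ}

lemma aestronglyMeasurable_comp_present {f : E → ℝ} (hf : Measurable f) (n : ℕ) :
    AEStronglyMeasurable[present X n] (fun ω ↦ f (X n ω)) μ :=
  (hf.comp (comap_measurable (X n))).aestronglyMeasurable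

namespace UEChain

lemma isProbabilityMeasure (h : UEChain μ X κ C) : IsProbabilityMeasure μ := h.1

lemma isMarkovKernel (h : UEChain μ X κ C) (n : ℕ) : IsMarkovKernel (κ n) := h.2.2.1 n

lemma measurable (h : UEChain μ X κ C) (n : ℕ) : Measurable (X n) := h.2.1 n

lemma present_le (h : UEChain μ X κ C) (n : ℕ) : present X n ≤ ‹MeasurableSpace Ω› :=
  (h.measurable n).comap_le

lemma past_le (h : UEChain μ X κ C) (n : ℕ) : past X n ≤ ‹MeasurableSpace Ω› :=
  iSup_le fun i ↦ h.present_le i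

lemma measure_inter_preimage (h : UEChain μ X κ C) {s : Set Ω} (hs : MeasurableSet[past X n] s)
    {A : Set E} (hA : MeasurableSet A) :
    μ (s ∩ X (n + 1) ⁻¹' A) = ∫⁻ ω in s, κ n (X n ω) A ∂μ := by
  have := h.isProbabilityMeasure
  have := h.isMarkovKernel n
  have transition_meas : Measurable fun ω ↦ κ n (X n ω) A :=
    ((κ n).measurable_coe hA).comp (h.measurable n)
  have hA' : MeasurableSet (X (n + 1) ⁻¹' A) := h.measurable (n + 1) hA
  have indicator_int : Integrable ((X (n + 1) ⁻¹' A).indicator fun _ ↦ (1 : ℝ)) μ :=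
    (integrable_const 1).indicator hA'
  have real_eq : μ.real (s ∩ X (n + 1) ⁻¹' A) = ∫ ω in s, (κ n (X n ω) A).toReal ∂μ := calc
    μ.real (s ∩ X (n + 1) ⁻¹' A)
    _ = ∫ ω in s, (X (n + 1) ⁻¹' A).indicator (fun _ ↦ (1 : ℝ)) ω ∂μ := by
      rw [setIntegral_indicator hA', setIntegral_const, smul_eq_mul, mul_one]
    _ = ∫ ω in s, μ[(X (n + 1) ⁻¹' A).indicator fun _ ↦ (1 : ℝ) | past X n] ω ∂μ :=
      (setIntegral_condExp (h.past_le n) indicator_int hs).symm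
    _ = ∫ ω in s, (κ n (X n ω) A).toReal ∂μ :=
      integral_congr_ae (ae_restrict_of_ae (h.2.2.2.1 n A hA))
  rw [integral_toReal transition_meas.aemeasurable
    (.of_forall fun ω ↦ measure_lt_top _ _)] at real_eq
  refine (ENNReal.toReal_eq_toReal_iff' (measure_ne_top _ _) (ne_of_lt ?_)).mp real_eq
  exact (lintegral_mono fun ω ↦ prob_le_one).trans_lt (by simp)

lemma quasiIndep (h : UEChain μ X κ C) (n : ℕ) :
    QuasiIndep C (past X n) (present X (n + 1)) μ := by
  rintro s _ hs ⟨A, hA, rfl⟩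
  have elliptic := h.2.2.2.2 n A hA
  have transition_meas : Measurable fun ω ↦ κ n (X n ω) A :=
    ((κ n).measurable_coe hA).comp (h.measurable n)
  rw [h.measure_inter_preimage hs hA, ← Measure.map_apply (h.measurable (n + 1)) hA,
    mul_comm (μ s), ← mul_assoc, ← setLIntegral_const s, ← setLIntegral_const s,
    ← lintegral_const_mul _ transition_meas]
  exact ⟨lintegral_mono_ae (ae_restrict_of_ae (elliptic.mono fun ω hω ↦ hω.1)),
    lintegral_mono_ae (ae_restrict_of_ae (elliptic.mono fun ω hω ↦ hω.2))⟩

lemma one_le (h : UEChain μ X κ C) : 1 ≤ C :=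
  have := h.isProbabilityMeasure
  (h.quasiIndep 0).one_le

lemma map_restrict_succ (h : UEChain μ X κ C) {s : Set Ω} (hs : MeasurableSet[past X n] s) :
    (μ.restrict s).map (X (n + 1)) = κ n ∘ₘ (μ.restrict s).map (X n) := by
  ext A hA
  rw [Measure.map_apply (h.measurable (n + 1)) hA,
    Measure.restrict_apply (h.measurable (n + 1) hA), Set.inter_comm,
    h.measure_inter_preimage hs hA, Measure.bind_apply hA (κ n).aemeasurable,
    lintegral_map ((κ n).measurable_coe hA) (h.measurable n)]

lemma condExp_comp_succ (h : UEChain μ X κ C) {f : E → ℝ} (hf : StronglyMeasurable f)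
    (hf_int : Integrable (f ∘ X (n + 1)) μ) :
    μ[f ∘ X (n + 1) | past X n] =ᵐ[μ] (fun x ↦ ∫ y, f y ∂κ n x) ∘ X n := by
  have := h.isProbabilityMeasure
  have := h.isMarkovKernel n
  have int_comp {s : Set Ω} (hs : MeasurableSet[past X n] s) :
      Integrable f ((κ n ∘ₖ Kernel.const Unit ((μ.restrict s).map (X n))) ()) := by
    rw [← Measure.comp_eq_comp_const_apply, ← h.map_restrict_succ hs]
    exact (integrable_map_measure hf.aestronglyMeasurable (h.measurable _).aemeasurable).mpr
      hf_int.integrableOn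
  have transition_meas : StronglyMeasurable fun x ↦ ∫ y, f y ∂κ n x := hf.integral_kernel
  symm
  refine ae_eq_condExp_of_forall_setIntegral_eq (h.past_le n) hf_int (fun s hs _ ↦ ?_)
    (fun s hs _ ↦ ?_) ?_
  · exact (int_comp hs).integral_comp.comp_measurable (h.measurable n)
  · calc ∫ ω in s, ((fun x ↦ ∫ y, f y ∂κ n x) ∘ X n) ω ∂μ
        = ∫ x, ∫ y, f y ∂κ n x ∂(μ.restrict s).map (X n) :=
          (integral_map (h.measurable n).aemeasurable
            transition_meas.aestronglyMeasurable).symm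
      _ = ∫ y, f y ∂(μ.restrict s).map (X (n + 1)) := by
          rw [h.map_restrict_succ hs, Measure.comp_eq_comp_const_apply,
            Kernel.integral_comp (int_comp hs), Kernel.const_apply]
      _ = ∫ ω in s, (f ∘ X (n + 1)) ω ∂μ :=
          integral_map (h.measurable _).aemeasurable hf.aestronglyMeasurable
  · exact ((transition_meas.comp_measurable (comap_measurable (X n))).mono
      (present_le_past le_rfl)).aestronglyMeasurable

lemma aestronglyMeasurable_condExp_past (h : UEChain μ X κ C) {Z : Ω → ℝ} (hZ : Integrable Z μ)
    (hZm : AEStronglyMeasurable[present X (n + 1)] Z μ) :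
    AEStronglyMeasurable[present X n] (μ[Z | past X n]) μ := by
  obtain ⟨f, hf, hf_eq⟩ := hZm.stronglyMeasurable_mk.exists_eq_measurable_comp
  have hZf : Z =ᵐ[μ] f ∘ X (n + 1) := hf_eq ▸ hZm.ae_eq_mk
  have := h.isMarkovKernel n
  exact ⟨_, hf.integral_kernel.comp_measurable (comap_measurable (X n)),
    (condExp_congr_ae hZf).trans (h.condExp_comp_succ hf (hZ.congr hZf))⟩

end UEChain

/-- The conditional expectation of the partial sum `Y j + ⋯ + Y (N - 1)` given the past at
time `j`. -/
def condTailSum (μ : Measure Ω) (X : ℕ → Ω → E) (Y : ℕ → Ω → ℝ) (N j : ℕ) : Ω → ℝ :=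
  μ[tailSum Y N j | past X j]

@[simp]
lemma condTailSum_self : condTailSum μ X Y N N = 0 := by simp [condTailSum]

lemma memLp_tailSum (hY : ∀ i, MemLp (Y i) 2 μ) (N j : ℕ) : MemLp (tailSum Y N j) 2 μ :=
  memLp_finsetSum' _ fun i _ ↦ hY i

lemma integrable_tailSum (hY : ∀ i, Integrable (Y i) μ) (N j : ℕ) :
    Integrable (tailSum Y N j) μ :=
  integrable_finsetSum' _ fun i _ ↦ hY i

lemma abs_tailSum_le {b : ℝ} (hYb : ∀ i, ∀ᵐ ω ∂μ, |Y i ω| ≤ b) (N j : ℕ) :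
    ∀ᵐ ω ∂μ, |tailSum Y N j ω| ≤ (N - j : ℕ) * b := by
  filter_upwards [ae_all_iff.mpr hYb] with ω hω
  rw [tailSum, Finset.sum_apply, ← nsmul_eq_mul, ← Nat.card_Ico]
  exact (abs_sum_le_sum_abs _ _).trans (sum_le_card_nsmul _ _ _ fun i _ ↦ hω i)

lemma memLp_condTailSum (hY : ∀ i, MemLp (Y i) 2 μ) (N j : ℕ) :
    MemLp (condTailSum μ X Y N j) 2 μ :=
  (memLp_tailSum hY N j).condExp one_le_two

lemma variance_condTailSum_add_sum_succ (hj : j ≤ N) :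
    Var[condTailSum μ X Y N j; μ] + ∑ i ∈ Ico j N, Var[condTailSum μ X Y N (i + 1); μ] =
      ∑ i ∈ Ico j N, Var[condTailSum μ X Y N i; μ] := by
  let v i := Var[condTailSum μ X Y N i; μ]
  have v_top : v N = 0 := by simp [v]
  rw [sum_Ico_add' v j N 1, ← sum_eq_sum_Ico_succ_bot (Nat.lt_succ_of_le hj) v,
    sum_Ico_succ_top hj, v_top, add_zero]

namespace UEChain

lemma condExp_condTailSum_succ (h : UEChain μ X κ C) (Y : ℕ → Ω → ℝ) (N j : ℕ) :
    μ[condTailSum μ X Y N (j + 1) | past X j] =ᵐ[μ] μ[tailSum Y N (j + 1) | past X j] :=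
  have := h.isProbabilityMeasure
  condExp_condExp_of_le (past_le_past j.le_succ) (h.past_le (j + 1))

lemma condTailSum_ae_eq_add (h : UEChain μ X κ C)
    (hYm : ∀ i, AEStronglyMeasurable[present X i] (Y i) μ) (hY : ∀ i, Integrable (Y i) μ)
    (hj : j < N) :
    condTailSum μ X Y N j =ᵐ[μ] Y j + μ[tailSum Y N (j + 1) | past X j] := by
  have := h.isProbabilityMeasure
  rw [condTailSum, tailSum_eq_add hj]
  exact (condExp_add (hY j) (integrable_tailSum hY N (j + 1)) _).trans
    ((condExp_of_aestronglyMeasurable' (h.past_le j)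
      ((hYm j).mono (present_le_past le_rfl)) (hY j)).add .rfl)

lemma aestronglyMeasurable_condTailSum (h : UEChain μ X κ C)
    (hYm : ∀ i, AEStronglyMeasurable[present X i] (Y i) μ) (hY : ∀ i, Integrable (Y i) μ)
    (hj : j ≤ N) : AEStronglyMeasurable[present X j] (condTailSum μ X Y N j) μ := by
  induction hj using Nat.decreasingInduction with
  | self => simpa using aestronglyMeasurable_zero
  | of_succ j hj ih =>
    have next_meas : AEStronglyMeasurable[present X j] (μ[tailSum Y N (j + 1) | past X j]) μ :=
      (h.aestronglyMeasurable_condExp_past integrable_condExp ih).congr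
        (h.condExp_condTailSum_succ Y N j)
    exact ((hYm j).add next_meas).congr (h.condTailSum_ae_eq_add hYm hY hj).symm

section Variance

variable (h : UEChain μ X κ C) (hYm : ∀ i, AEStronglyMeasurable[present X i] (Y i) μ)
  (hY : ∀ i, MemLp (Y i) 2 μ)

include h hYm hY

lemma variance_condExp_tailSum_succ_le (hj : j < N) :
    Var[μ[tailSum Y N (j + 1) | past X j]; μ] ≤
      (1 - C⁻¹) * Var[condTailSum μ X Y N (j + 1); μ] := by
  have := h.isProbabilityMeasure
  rw [← variance_congr (h.condExp_condTailSum_succ Y N j)]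
  exact (h.quasiIndep j).variance_condExp_le (h.past_le j) (h.present_le (j + 1))
    (h.aestronglyMeasurable_condTailSum hYm (fun i ↦ (hY i).integrable one_le_two) hj)
    (memLp_condTailSum hY N (j + 1))

lemma variance_tailSum_add_variance_condExp (hj : j < N) :
    Var[tailSum Y N j; μ] + Var[μ[tailSum Y N (j + 1) | past X j]; μ] =
      Var[condTailSum μ X Y N j; μ] + Var[tailSum Y N (j + 1); μ] := by
  have := h.isProbabilityMeasure
  rw [variance_congr
    (h.condTailSum_ae_eq_add hYm (fun i ↦ (hY i).integrable one_le_two) hj), tailSum_eq_add hj]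
  exact variance_add_add_variance_condExp (h.past_le j) ((hYm j).mono (present_le_past le_rfl))
    (hY j) (memLp_tailSum hY N (j + 1))

lemma variance_tailSum_eq_sum (hj : j ≤ N) :
    Var[tailSum Y N j; μ] = ∑ i ∈ Ico j N,
      (Var[condTailSum μ X Y N i; μ] - Var[μ[tailSum Y N (i + 1) | past X i]; μ]) := by
  induction hj using Nat.decreasingInduction with
  | self => simp
  | of_succ j hj ih =>
    rw [sum_eq_sum_Ico_succ_bot hj, ← ih]
    linarith [h.variance_tailSum_add_variance_condExp hYm hY hj]

lemma sum_variance_condExp_tailSum_succ_le (hj : j ≤ N) :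
    ∑ i ∈ Ico j N, Var[μ[tailSum Y N (i + 1) | past X i]; μ] ≤
      (1 - C⁻¹) * ∑ i ∈ Ico j N, Var[condTailSum μ X Y N i; μ] := by
  have contraction_nonneg : 0 ≤ 1 - C⁻¹ := sub_nonneg.mpr (inv_le_one_of_one_le₀ h.one_le)
  have shift_le : ∑ i ∈ Ico j N, Var[condTailSum μ X Y N (i + 1); μ] ≤
      ∑ i ∈ Ico j N, Var[condTailSum μ X Y N i; μ] := by
    rw [← variance_condTailSum_add_sum_succ hj]
    exact le_add_of_nonneg_left (variance_nonneg _ _)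
  refine le_trans ?_ (mul_le_mul_of_nonneg_left shift_le contraction_nonneg)
  rw [mul_sum]
  exact sum_le_sum fun i hi ↦ h.variance_condExp_tailSum_succ_le hYm hY (mem_Ico.mp hi).2

lemma sum_variance_condTailSum_le (hj : j ≤ N) :
    ∑ i ∈ Ico j N, Var[condTailSum μ X Y N i; μ] ≤ C * Var[tailSum Y N j; μ] := by
  have hC : 0 < C := zero_lt_one.trans_le h.one_le
  rw [← inv_mul_le_iff₀ hC, h.variance_tailSum_eq_sum hYm hY hj, sum_sub_distrib]
  linarith [h.sum_variance_condExp_tailSum_succ_le hYm hY hj]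

lemma sum_variance_condExp_tailSum_succ_le_mul (hj : j ≤ N) :
    ∑ i ∈ Ico j N, Var[μ[tailSum Y N (i + 1) | past X i]; μ] ≤ C * Var[tailSum Y N j; μ] := by
  have hC : 0 < C := zero_lt_one.trans_le h.one_le
  refine (h.sum_variance_condExp_tailSum_succ_le hYm hY hj).trans
    (le_trans ?_ (h.sum_variance_condTailSum_le hYm hY hj))
  exact mul_le_of_le_one_left (sum_nonneg fun i _ ↦ variance_nonneg _ _)
    (sub_le_self _ (inv_nonneg.mpr hC.le))

theorem sum_variance_le (hj : j ≤ N) :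
    ∑ i ∈ Ico j N, Var[Y i; μ] ≤ 4 * C * Var[tailSum Y N j; μ] := by
  have := h.isProbabilityMeasure
  have summand_le (i : ℕ) (hi : i ∈ Ico j N) : Var[Y i; μ] ≤
      2 * (Var[condTailSum μ X Y N i; μ] + Var[μ[tailSum Y N (i + 1) | past X i]; μ]) := by
    have Y_eq : Y i =ᵐ[μ] condTailSum μ X Y N i + -μ[tailSum Y N (i + 1) | past X i] := by
      filter_upwards [h.condTailSum_ae_eq_add hYm (fun i ↦ (hY i).integrable one_le_two)
        (mem_Ico.mp hi).2] with ω hω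
      simp [hω]
    have young := variance_add_le_of_pos (memLp_condTailSum (X := X) hY N i)
      ((memLp_tailSum hY N (i + 1)).condExp (m := past X i) one_le_two).neg one_pos
    rw [variance_neg, ← variance_congr Y_eq] at young
    linarith
  have sum_le := sum_le_sum summand_le
  rw [← mul_sum, sum_add_distrib] at sum_le
  linarith [h.sum_variance_condTailSum_le hYm hY hj,
    h.sum_variance_condExp_tailSum_succ_le_mul hYm hY hj]

theorem variance_tailSum_le (hj : j ≤ N) :
    Var[tailSum Y N j; μ] ≤ 2 * (1 + 2 * C) * ∑ i ∈ Ico j N, Var[Y i; μ] := by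
  have := h.isProbabilityMeasure
  have hC : 0 < C := zero_lt_one.trans_le h.one_le
  -- The weight `2 C` in Young's inequality leaves half of the left-hand side to be absorbed.
  have summand_le (i : ℕ) (hi : i ∈ Ico j N) :
      Var[condTailSum μ X Y N i; μ] - Var[μ[tailSum Y N (i + 1) | past X i]; μ] ≤
        (1 + 2 * C) * Var[Y i; μ] + (2 * C)⁻¹ * Var[μ[tailSum Y N (i + 1) | past X i]; μ] := by
    have young := variance_add_le_of_pos (hY i)
      ((memLp_tailSum hY N (i + 1)).condExp (m := past X i) one_le_two)
      (δ := (2 * C)⁻¹) (by positivity)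
    rw [inv_inv, ← variance_congr (h.condTailSum_ae_eq_add hYm
      (fun i ↦ (hY i).integrable one_le_two) (mem_Ico.mp hi).2)] at young
    linarith
  have sum_le := sum_le_sum summand_le
  rw [← h.variance_tailSum_eq_sum hYm hY hj, sum_add_distrib, ← mul_sum, ← mul_sum] at sum_le
  have absorbed : (2 * C)⁻¹ * ∑ i ∈ Ico j N, Var[μ[tailSum Y N (i + 1) | past X i]; μ] ≤
      Var[tailSum Y N j; μ] / 2 := by
    rw [inv_mul_le_iff₀ (by positivity)]
    linarith [h.sum_variance_condExp_tailSum_succ_le_mul hYm hY hj]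
  linarith

end Variance

section ExponentialMoments

variable {b c p : ℝ}

lemma integral_condTailSum (h : UEChain μ X κ C) (hY : ∀ i, Integrable (Y i) μ)
    (hY_zero : ∀ i, ∫ ω, Y i ω ∂μ = 0) (N j : ℕ) : ∫ ω, condTailSum μ X Y N j ω ∂μ = 0 := by
  have := h.isProbabilityMeasure
  rw [condTailSum, integral_condExp (h.past_le j)]
  simp only [tailSum, Finset.sum_apply]
  rw [integral_finsetSum _ fun i _ ↦ hY i]
  exact sum_eq_zero fun i _ ↦ hY_zero i

lemma integral_sq_condTailSum (h : UEChain μ X κ C) (hY : ∀ i, MemLp (Y i) 2 μ)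
    (hY_zero : ∀ i, ∫ ω, Y i ω ∂μ = 0) (N j : ℕ) :
    ∫ ω, condTailSum μ X Y N j ω ^ 2 ∂μ = Var[condTailSum μ X Y N j; μ] :=
  have := h.isProbabilityMeasure
  (variance_of_integral_eq_zero (memLp_condTailSum hY N j).1.aemeasurable
    (h.integral_condTailSum (fun i ↦ (hY i).integrable one_le_two) hY_zero N j)).symm

variable (h : UEChain μ X κ C) (hYm : ∀ i, AEStronglyMeasurable[present X i] (Y i) μ)
  (hYb : ∀ i, ∀ᵐ ω ∂μ, |Y i ω| ≤ b)

include h hYm hYb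

lemma memLp_of_abs_le (q : ℝ≥0∞) (i : ℕ) : MemLp (Y i) q μ :=
  have := h.isProbabilityMeasure
  .of_bound ((hYm i).mono (h.present_le i)) b (hYb i)

lemma integrable_exp_tailSum (N j : ℕ) : Integrable (fun ω ↦ Real.exp (tailSum Y N j ω)) μ :=
  have := h.isProbabilityMeasure
  integrable_exp_of_abs_le (memLp_tailSum (h.memLp_of_abs_le hYm hYb 2) N j).1
    (abs_tailSum_le hYb N j)

variable (hY_zero : ∀ i, ∫ ω, Y i ω ∂μ = 0)

include hY_zero

-- `b * C` is the fixed point of `x ↦ b + (1 - C⁻¹) * x`, the bound gained in one backward step.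
lemma abs_condTailSum_le (hj : j ≤ N) : ∀ᵐ ω ∂μ, |condTailSum μ X Y N j ω| ≤ b * C := by
  have := h.isProbabilityMeasure
  have hC : 0 < C := zero_lt_one.trans_le h.one_le
  have hY_int i := memLp_one_iff_integrable.mp (h.memLp_of_abs_le hYm hYb 1 i)
  induction hj using Nat.decreasingInduction with
  | self =>
    obtain ⟨ω, hω⟩ := (hYb 0).exists
    have hb : 0 ≤ b := (abs_nonneg _).trans hω
    simpa using mul_nonneg hb hC.le
  | of_succ j hj ih =>
    have contraction := (h.quasiIndep j).abs_condExp_le (h.past_le j) (h.present_le (j + 1))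
      (h.aestronglyMeasurable_condTailSum hYm hY_int hj)
      (h.integral_condTailSum hY_int hY_zero N (j + 1)) ih
    filter_upwards [hYb j, contraction, h.condExp_condTailSum_succ Y N j,
      h.condTailSum_ae_eq_add hYm hY_int hj] with ω hω_Y hω_contraction hω_tower hω_add
    rw [hω_tower] at hω_contraction
    rw [hω_add, Pi.add_apply]
    have fixed_point : b + (1 - C⁻¹) * (b * C) = b * C := by field_simp; ring
    linarith [abs_add_le (Y j ω) (μ[tailSum Y N (j + 1) | past X j] ω)]

variable (hbC : b * C ≤ 1)

include hbC

lemma abs_condTailSum_le_one (hj : j ≤ N) : ∀ᵐ ω ∂μ, |condTailSum μ X Y N j ω| ≤ 1 :=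
  (h.abs_condTailSum_le hYm hYb hY_zero hj).mono fun _ hω ↦ hω.trans hbC

lemma condExp_exp_condTailSum_succ_le (hj : j < N) :
    ∀ᵐ ω ∂μ, μ[fun ω ↦ Real.exp (condTailSum μ X Y N (j + 1) ω) | past X j] ω ≤
      Real.exp (μ[tailSum Y N (j + 1) | past X j] ω +
        C * Var[condTailSum μ X Y N (j + 1); μ]) := by
  have := h.isProbabilityMeasure
  have hY_int i := memLp_one_iff_integrable.mp (h.memLp_of_abs_le hYm hYb 1 i)
  filter_upwards [h.condExp_condTailSum_succ Y N j,
    (h.quasiIndep j).condExp_exp_le_exp_add_integral_sq (h.past_le j) (h.present_le (j + 1))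
      (h.aestronglyMeasurable_condTailSum hYm hY_int hj)
      (h.abs_condTailSum_le_one hYm hYb hY_zero hbC hj)] with ω hω_tower hω_exp
  rwa [hω_tower, h.integral_sq_condTailSum (h.memLp_of_abs_le hYm hYb 2) hY_zero] at hω_exp

lemma condExp_exp_tailSum_le_of_succ {a : ℝ} (hj : j < N)
    (ha : ∀ᵐ ω ∂μ, μ[fun ω ↦ Real.exp (tailSum Y N (j + 1) ω) | past X (j + 1)] ω ≤
      Real.exp (condTailSum μ X Y N (j + 1) ω + a)) :
    ∀ᵐ ω ∂μ, μ[fun ω ↦ Real.exp (tailSum Y N j ω) | past X j] ω ≤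
      Real.exp (condTailSum μ X Y N j ω + (C * Var[condTailSum μ X Y N (j + 1); μ] + a)) := by
  have := h.isProbabilityMeasure
  have hY_int i := memLp_one_iff_integrable.mp (h.memLp_of_abs_le hYm hYb 1 i)
  have exp_U_int : Integrable (fun ω ↦ Real.exp (condTailSum μ X Y N (j + 1) ω)) μ :=
    integrable_exp_of_abs_le integrable_condExp.1
      (h.abs_condTailSum_le_one hYm hYb hY_zero hbC hj)
  have exp_tailSum_eq : (fun ω ↦ Real.exp (tailSum Y N j ω)) =
      (fun ω ↦ Real.exp (Y j ω)) * fun ω ↦ Real.exp (tailSum Y N (j + 1) ω) := by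
    ext ω
    rw [tailSum_eq_add hj, Pi.add_apply, Real.exp_add, Pi.mul_apply]
  have pull_out := condExp_mul_of_aestronglyMeasurable_left
    (Real.continuous_exp.comp_aestronglyMeasurable ((hYm j).mono (present_le_past le_rfl)))
    (exp_tailSum_eq ▸ h.integrable_exp_tailSum hYm hYb N j)
    (h.integrable_exp_tailSum hYm hYb N (j + 1))
  have tower_le := condExp_le_mul_condExp_of_condExp_le (past_le_past j.le_succ)
    (h.past_le (j + 1)) exp_U_int
    (ha.mono fun ω hω ↦ hω.trans_eq ((Real.exp_add _ a).trans (mul_comm _ _)))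
  rw [exp_tailSum_eq]
  filter_upwards [pull_out, tower_le, h.condExp_exp_condTailSum_succ_le hYm hYb hY_zero hbC hj,
    h.condTailSum_ae_eq_add hYm hY_int hj] with ω hω_pull hω_tower hω_exp hω_add
  rw [hω_pull, Pi.mul_apply, hω_add, Pi.add_apply, add_assoc, ← add_assoc (_ : ℝ) _ a,
    Real.exp_add, Real.exp_add _ a, mul_comm _ (Real.exp a)]
  gcongr
  exact hω_tower.trans (by gcongr)

lemma condExp_exp_tailSum_le (hj : j ≤ N) :
    ∀ᵐ ω ∂μ, μ[fun ω ↦ Real.exp (tailSum Y N j ω) | past X j] ω ≤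
      Real.exp (condTailSum μ X Y N j ω +
        C * ∑ i ∈ Ico j N, Var[condTailSum μ X Y N (i + 1); μ]) := by
  have := h.isProbabilityMeasure
  induction hj using Nat.decreasingInduction with
  | self => simp [condExp_const (μ := μ) (h.past_le N) (1 : ℝ)]
  | of_succ j hj ih =>
    rw [sum_eq_sum_Ico_succ_bot hj, mul_add]
    exact h.condExp_exp_tailSum_le_of_succ hYm hYb hY_zero hbC hj ih

lemma integral_exp_condTailSum_le (hj : j ≤ N) :
    ∫ ω, Real.exp (condTailSum μ X Y N j ω) ∂μ ≤ Real.exp (Var[condTailSum μ X Y N j; μ]) := by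
  have := h.isProbabilityMeasure
  have hY_int i := memLp_one_iff_integrable.mp (h.memLp_of_abs_le hYm hYb 1 i)
  have exp_le := condExp_exp_le (μ := μ) bot_le (f := condTailSum μ X Y N j)
    integrable_condExp.1 (h.abs_condTailSum_le_one hYm hYb hY_zero hbC hj)
  simpa [condExp_bot, h.integral_condTailSum hY_int hY_zero,
    h.integral_sq_condTailSum (h.memLp_of_abs_le hYm hYb 2) hY_zero] using exp_le

theorem integral_exp_tailSum_le (hj : j ≤ N) :
    ∫ ω, Real.exp (tailSum Y N j ω) ∂μ ≤ Real.exp (C ^ 2 * Var[tailSum Y N j; μ]) := by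
  have := h.isProbabilityMeasure
  set S := ∑ i ∈ Ico j N, Var[condTailSum μ X Y N (i + 1); μ]
  have variance_sum_le : Var[condTailSum μ X Y N j; μ] + C * S ≤ C ^ 2 * Var[tailSum Y N j; μ] := by
    nlinarith [h.one_le, variance_nonneg (condTailSum μ X Y N j) μ,
      h.sum_variance_condTailSum_le hYm (h.memLp_of_abs_le hYm hYb 2) hj,
      variance_condTailSum_add_sum_succ (μ := μ) (X := X) (Y := Y) hj]
  have exp_U_int : Integrable (fun ω ↦ Real.exp (condTailSum μ X Y N j ω)) μ :=
    integrable_exp_of_abs_le integrable_condExp.1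
      (h.abs_condTailSum_le_one hYm hYb hY_zero hbC hj)
  calc ∫ ω, Real.exp (tailSum Y N j ω) ∂μ
    _ = ∫ ω, μ[fun ω ↦ Real.exp (tailSum Y N j ω) | past X j] ω ∂μ :=
      (integral_condExp (h.past_le j)).symm
    _ ≤ ∫ ω, Real.exp (condTailSum μ X Y N j ω) * Real.exp (C * S) ∂μ :=
      integral_mono_ae integrable_condExp (exp_U_int.mul_const _)
        ((h.condExp_exp_tailSum_le hYm hYb hY_zero hbC hj).mono fun ω hω ↦
          hω.trans_eq (Real.exp_add _ _))
    _ ≤ Real.exp (Var[condTailSum μ X Y N j; μ]) * Real.exp (C * S) := by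
      rw [integral_mul_const]
      gcongr
      exact h.integral_exp_condTailSum_le hYm hYb hY_zero hbC hj
    _ ≤ Real.exp (C ^ 2 * Var[tailSum Y N j; μ]) := by
      rw [← Real.exp_add]
      gcongr

omit hbC

lemma integrable_exp_mul_tailSum_and_mgf_le (hc : |c| * b * C ≤ 1) (hj : j ≤ N) :
    Integrable (fun ω ↦ Real.exp (c * tailSum Y N j ω)) μ ∧
      mgf (tailSum Y N j) μ c ≤ Real.exp (C ^ 2 * (c ^ 2 * Var[tailSum Y N j; μ])) := by
  have tailSum_smul : tailSum (fun i ↦ c • Y i) N j = c • tailSum Y N j := smul_sum.symm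
  have hcYm i : AEStronglyMeasurable[present X i] (c • Y i) μ := (hYm i).const_smul c
  have hcYb i : ∀ᵐ ω ∂μ, |(c • Y i) ω| ≤ |c| * b := (hYb i).mono fun ω hω ↦ by
    rw [Pi.smul_apply, smul_eq_mul, abs_mul]
    gcongr
  have hcY_zero i : ∫ ω, (c • Y i) ω ∂μ = 0 := by
    simp only [Pi.smul_apply, integral_smul, hY_zero, smul_zero]
  have integrable := h.integrable_exp_tailSum hcYm hcYb N j
  have integral_le := h.integral_exp_tailSum_le hcYm hcYb hcY_zero hc hj
  rw [tailSum_smul] at integrable integral_le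
  rw [variance_smul] at integral_le
  exact ⟨integrable, integral_le⟩

theorem rpow_integral_rpow_abs_tailSum_le (hp : 0 < p) (hj : j ≤ N) :
    (∫ ω, |tailSum Y N j ω| ^ p ∂μ) ^ (1 / p) ≤
      (b * C + 1) * p * (2 * Real.exp (C ^ 2)) ^ (1 / p) * (1 + √Var[tailSum Y N j; μ]) := by
  have := h.isProbabilityMeasure
  obtain ⟨ω, hω⟩ := (hYb 0).exists
  have hbC : 0 ≤ b * C := mul_nonneg ((abs_nonneg _).trans hω) (zero_le_one.trans h.one_le)
  set V := Var[tailSum Y N j; μ]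
  -- At this scale both the summands and the variance of the sum are at most of order one.
  let l : ℝ := ((b * C + 1) * (1 + √V))⁻¹
  have hl : 0 < l := by positivity
  have l_bC_le : l * b * C ≤ 1 := by
    rw [mul_assoc, inv_mul_le_iff₀ (by positivity)]
    nlinarith [Real.sqrt_nonneg V]
  have l_sq_V_le : l ^ 2 * V ≤ 1 := by
    have l_sqrt_le : l * √V ≤ 1 := by
      rw [inv_mul_le_iff₀ (by positivity)]
      nlinarith [Real.sqrt_nonneg V]
    calc l ^ 2 * V = (l * √V) ^ 2 := by rw [mul_pow, Real.sq_sqrt (variance_nonneg _ _)]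
      _ ≤ 1 := pow_le_one₀ (by positivity) l_sqrt_le
  have exp_le {c : ℝ} (hc : |c| = l) : Integrable (fun ω ↦ Real.exp (c * tailSum Y N j ω)) μ ∧
      mgf (tailSum Y N j) μ c ≤ Real.exp (C ^ 2) := by
    refine (h.integrable_exp_mul_tailSum_and_mgf_le hYm hYb hY_zero (hc ▸ l_bC_le) hj).imp_right
      fun hmgf ↦ hmgf.trans (Real.exp_le_exp.mpr (mul_le_of_le_one_right (sq_nonneg C) ?_))
    rwa [← sq_abs, hc]
  have exp_le_pos := exp_le (abs_of_pos hl)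
  have exp_le_neg := exp_le ((abs_neg l).trans (abs_of_pos hl))
  refine (rpow_integral_rpow_abs_le_of_mgf_le hl hp exp_le_pos.1 exp_le_neg.1 exp_le_pos.2
    exp_le_neg.2).trans_eq ?_
  rw [div_inv_eq_mul]
  ring

omit hY_zero

theorem rpow_integral_rpow_abs_tailSum_sub_integral_le (hp : 0 < p) (hj : j ≤ N) :
    (∫ ω, |tailSum Y N j ω - ∫ ω', tailSum Y N j ω' ∂μ| ^ p ∂μ) ^ (1 / p) ≤
      (2 * b * C + 1) * p * (2 * Real.exp (C ^ 2)) ^ (1 / p) * (1 + √Var[tailSum Y N j; μ]) := by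
  have := h.isProbabilityMeasure
  have hY_int i := memLp_one_iff_integrable.mp (h.memLp_of_abs_le hYm hYb 1 i)
  let Z : ℕ → Ω → ℝ := fun i ω ↦ Y i ω - ∫ ω', Y i ω' ∂μ
  have hZm i : AEStronglyMeasurable[present X i] (Z i) μ :=
    (hYm i).sub aestronglyMeasurable_const
  have hZb i : ∀ᵐ ω ∂μ, |Z i ω| ≤ 2 * b := by
    have integral_le : |∫ ω, Y i ω ∂μ| ≤ b := by
      simpa using norm_integral_le_of_norm_le_const (μ := μ) (f := Y i) (hYb i)
    filter_upwards [hYb i] with ω hω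
    linarith [abs_sub (Y i ω) (∫ ω', Y i ω' ∂μ)]
  have hZ_zero i : ∫ ω, Z i ω ∂μ = 0 := by
    simp [Z, integral_sub (hY_int i) (integrable_const _)]
  have tailSum_Z : tailSum Z N j = fun ω ↦ tailSum Y N j ω - ∫ ω', tailSum Y N j ω' ∂μ := by
    ext ω
    simp only [tailSum, Finset.sum_apply, Z, sum_sub_distrib]
    rw [integral_finsetSum _ fun i _ ↦ hY_int i]
  have moment_le := h.rpow_integral_rpow_abs_tailSum_le hZm hZb hZ_zero hp hj
  rwa [tailSum_Z, variance_sub_const (integrable_tailSum hY_int N j).1] at moment_le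

end ExponentialMoments

end UEChain
end MarkovChain

theorem variance_and_moment_estimates_general {Ω E : Type*} [MeasurableSpace Ω]
    [MeasurableSpace E] {μ : Measure Ω} {X : ℕ → Ω → E} {κ : ℕ → Kernel E E} {C : ℝ}
    (h : UEChain μ X κ C) {g : ℕ → E → ℝ} (hg : ∀ n, Measurable (g n)) {k n : ℕ} (hkn : k ≤ n) :
    ((∀ j, MemLp (fun ω ↦ g j (X j ω)) 2 μ) →
      (4 * C)⁻¹ * ∑ j ∈ Icc k n, Var[fun ω ↦ g j (X j ω); μ] ≤
          Var[fun ω ↦ ∑ j ∈ Icc k n, g j (X j ω); μ] ∧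
        Var[fun ω ↦ ∑ j ∈ Icc k n, g j (X j ω); μ] ≤
          2 * (1 + 2 * C) * ∑ j ∈ Icc k n, Var[fun ω ↦ g j (X j ω); μ]) ∧
    ∀ p : ℝ, 0 < p → ∀ B : ℝ, (∀ j, ∀ᵐ ω ∂μ, |g j (X j ω)| ≤ B) →
      (∫ ω, |(∑ j ∈ Icc k n, g j (X j ω)) - ∫ ω', (∑ j ∈ Icc k n, g j (X j ω')) ∂μ| ^ p ∂μ)
          ^ (1 / p) ≤
        (2 * B * C + 1) * p * (2 * Real.exp (C ^ 2)) ^ (1 / p) *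
          (1 + √Var[fun ω ↦ ∑ j ∈ Icc k n, g j (X j ω); μ]) := by
  have hC : 0 < C := zero_lt_one.trans_le h.one_le
  have hgm j := aestronglyMeasurable_comp_present (X := X) (μ := μ) (hg j) j
  have hkn' : k ≤ n + 1 := Nat.le_succ_of_le hkn
  refine ⟨fun hg_mem ↦ ?_, fun p hp B hgB ↦ ?_⟩
  · rw [← tailSum_succ_eq_sum_Icc, ← Ico_add_one_right_eq_Icc, inv_mul_le_iff₀ (by positivity)]
    exact ⟨h.sum_variance_le hgm hg_mem hkn', h.variance_tailSum_le hgm hg_mem hkn'⟩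
  · simpa only [tailSum_succ_eq_sum_Icc] using
      h.rpow_integral_rpow_abs_tailSum_sub_integral_le hgm hgB hp hkn'

/-- Lemma 3.4. For additive functionals `G_{k,n} = ∑_{j=k}^n g_j(X_j)`
of a uniformly elliptic Markov chain:
(i) `C₁ ∑_j Var(G_j) ≤ Var(G_{k,n}) ≤ C₂ ∑_j Var(G_j)`, with `C₁, C₂` depending only on
the ellipticity constant `C`; and
(ii) for every `p > 2`, `‖G_{k,n} - 𝔼 G_{k,n}‖_{L^p} ≤ R_p (1 + √Var(G_{k,n}))`, with
`R_p` depending only on `p`, `C` and `sup_j ‖G_j‖_∞`. -/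
theorem variance_and_moment_estimates (C : ℝ) (hC : 1 < C) :
    (∃ C₁ C₂ : ℝ, 0 < C₁ ∧ 0 < C₂ ∧
      ∀ (Ω E : Type) [MeasurableSpace Ω] [MeasurableSpace E]
        (μ : Measure Ω) (X : ℕ → Ω → E) (κ : ℕ → Kernel E E) (g : ℕ → E → ℝ),
        UEChain μ X κ C →
        (∀ n, Measurable (g n)) →
        (∃ B : ℝ, ∀ n x, |g n x| ≤ B) →
        ∀ k n : ℕ, k ≤ n →
          C₁ * ∑ j ∈ Finset.Icc k n, variance (fun ω => g j (X j ω)) μ ≤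
              variance (fun ω => ∑ j ∈ Finset.Icc k n, g j (X j ω)) μ ∧
            variance (fun ω => ∑ j ∈ Finset.Icc k n, g j (X j ω)) μ ≤
              C₂ * ∑ j ∈ Finset.Icc k n, variance (fun ω => g j (X j ω)) μ) ∧
    (∀ p : ℝ, 2 < p → ∀ B : ℝ, 0 ≤ B →
      ∃ Rp : ℝ, 0 < Rp ∧
        ∀ (Ω E : Type) [MeasurableSpace Ω] [MeasurableSpace E]
          (μ : Measure Ω) (X : ℕ → Ω → E) (κ : ℕ → Kernel E E) (g : ℕ → E → ℝ),
          UEChain μ X κ C →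
          (∀ n, Measurable (g n)) →
          (∀ n x, |g n x| ≤ B) →
          ∀ k n : ℕ, k ≤ n →
            (∫ ω, |(∑ j ∈ Finset.Icc k n, g j (X j ω)) -
                ∫ ω', (∑ j ∈ Finset.Icc k n, g j (X j ω')) ∂μ| ^ p ∂μ) ^ (1 / p)
              ≤ Rp * (1 + Real.sqrt (variance (fun ω => ∑ j ∈ Finset.Icc k n, g j (X j ω)) μ))) := by
  refine ⟨⟨(4 * C)⁻¹, 2 * (1 + 2 * C), by positivity, by positivity, ?_⟩, fun p hp B hB ↦
    ⟨(2 * B * C + 1) * p * (2 * Real.exp (C ^ 2)) ^ (1 / p), by positivity, ?_⟩⟩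
  · exact fun Ω E _ _ μ X κ g h hg ⟨B, hB⟩ k n hkn ↦
      (variance_and_moment_estimates_general h hg hkn).1 <| h.memLp_of_abs_le
        (fun j ↦ aestronglyMeasurable_comp_present (hg j) j) (fun j ↦ .of_forall fun ω ↦ hB j _) 2
  · exact fun Ω E _ _ μ X κ g h hg hgB k n hkn ↦
      (variance_and_moment_estimates_general h hg hkn).2 p (by positivity) B
        fun j ↦ .of_forall fun ω ↦ hgB j _

end EdgeworthMC
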